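/- Let A = Σ_{s≥0} P_s(ℰ) D^s be an operator on polynomials in (x,ξ) on ℝⁿ, where each P_s is a polynomial in one variable, ℰ = ξⱼ∂/∂ξⱼ, and D = ∂²/∂xʲ∂ξⱼ. Then for the lifted inversion generator L_{X_i} one has [L_{X_i}, A] = Σ_{s≥1} s P_s(ℰ)(2ℰ + n + s) D^{s−1} ∘ ∂/∂ξᵢ, and this vanishes for all i if and only if P_s = 0 for all s ≥ 1 (when restricted to polynomials of arbitrarily large degree in ξ). Consequently any such A commuting with all inversions equals P₀(ℰ). -/

import Mathlib

open MvPolynomial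

/-- The fiberwise Euler operator `ℰ = Σⱼ ξⱼ ∂/∂ξⱼ` as a linear endomorphism of
`ℂ[x¹,…,xⁿ,ξ₁,…,ξₙ]` (`x` variables indexed by `Sum.inl`, `ξ` by `Sum.inr`). -/
noncomputable def endE (n : ℕ) : Module.End ℂ (MvPolynomial (Fin n ⊕ Fin n) ℂ) :=
  ∑ j : Fin n,
    (LinearMap.mulLeft ℂ (X (Sum.inr j))).comp (pderiv (Sum.inr j)).toLinearMap

/-- The divergence operator `D = Σⱼ ∂²/∂xʲ∂ξⱼ` as a linear endomorphism. -/
noncomputable def endD (n : ℕ) : Module.End ℂ (MvPolynomial (Fin n ⊕ Fin n) ℂ) :=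
  ∑ j : Fin n,
    ((pderiv (Sum.inl j)).toLinearMap).comp (pderiv (Sum.inr j)).toLinearMap

/-- The partial derivative `∂/∂ξᵢ` as a linear endomorphism. -/
noncomputable def endXi (n : ℕ) (i : Fin n) :
    Module.End ℂ (MvPolynomial (Fin n ⊕ Fin n) ℂ) :=
  (pderiv (Sum.inr i)).toLinearMap

/-- The canonical lift `L_{X_i}` of the inversion generator `X_i = xⁱxʲ∂/∂xʲ`,
`L_{X_i} F = Σⱼ xⁱxʲ ∂F/∂xʲ − (Σⱼ ξⱼxʲ) ∂F/∂ξᵢ − xⁱ Σⱼ ξⱼ ∂F/∂ξⱼ`,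
as a linear endomorphism. -/
noncomputable def endL (n : ℕ) (i : Fin n) :
    Module.End ℂ (MvPolynomial (Fin n ⊕ Fin n) ℂ) :=
  (∑ j : Fin n,
      (LinearMap.mulLeft ℂ (X (Sum.inl i) * X (Sum.inl j))).comp
        (pderiv (Sum.inl j)).toLinearMap)
    - (LinearMap.mulLeft ℂ (∑ j : Fin n, X (Sum.inr j) * X (Sum.inl j))).comp
        (pderiv (Sum.inr i)).toLinearMap
    - (LinearMap.mulLeft ℂ (X (Sum.inl i))).comp
        (∑ j : Fin n,
          (LinearMap.mulLeft ℂ (X (Sum.inr j))).comp (pderiv (Sum.inr j)).toLinearMap)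


noncomputable def dE (n : ℕ) : Derivation ℂ (MvPolynomial (Fin n ⊕ Fin n) ℂ) (MvPolynomial (Fin n ⊕ Fin n) ℂ) :=
  ∑ j : Fin n, (X (Sum.inr j) : MvPolynomial (Fin n ⊕ Fin n) ℂ) • pderiv (Sum.inr j)

noncomputable def dX (n : ℕ) : Derivation ℂ (MvPolynomial (Fin n ⊕ Fin n) ℂ) (MvPolynomial (Fin n ⊕ Fin n) ℂ) :=
  ∑ j : Fin n, (X (Sum.inl j) : MvPolynomial (Fin n ⊕ Fin n) ℂ) • pderiv (Sum.inl j)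

noncomputable def dL (n : ℕ) (i : Fin n) : Derivation ℂ (MvPolynomial (Fin n ⊕ Fin n) ℂ) (MvPolynomial (Fin n ⊕ Fin n) ℂ) :=
  (X (Sum.inl i) : MvPolynomial (Fin n ⊕ Fin n) ℂ) • dX n
   - (∑ j : Fin n, (X (Sum.inr j) * X (Sum.inl j)) : MvPolynomial (Fin n ⊕ Fin n) ℂ) • pderiv (Sum.inr i)
   - (X (Sum.inl i) : MvPolynomial (Fin n ⊕ Fin n) ℂ) • dE n

lemma der_sum_apply {R A : Type*} [CommSemiring R] [CommSemiring A] [Algebra R A] {ι : Type*} (s : Finset ι) (f : ι → Derivation R A A) (a : A) :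
    (∑ j ∈ s, f j) a = ∑ j ∈ s, f j a := by
  classical
  induction s using Finset.induction_on with
  | empty => simp
  | insert a s h ih => simp [Finset.sum_insert h, ih]

lemma dE_apply (n : ℕ) (F) : dE n F = ∑ j : Fin n, X (Sum.inr j) * pderiv (Sum.inr j) F := by
  simp [dE, der_sum_apply]
lemma dX_apply (n : ℕ) (F) : dX n F = ∑ j : Fin n, X (Sum.inl j) * pderiv (Sum.inl j) F := by
  simp [dX, der_sum_apply]

lemma endE_apply (n : ℕ) (F) : endE n F = dE n F := by
  simp [endE, dE_apply]
lemma endD_apply (n : ℕ) (F : MvPolynomial (Fin n ⊕ Fin n) ℂ) : endD n F = ∑ j, pderiv (Sum.inl j) (pderiv (Sum.inr j) F) := by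
  simp [endD]
lemma endXi_apply (n : ℕ) (i F) : endXi n i F = pderiv (Sum.inr i) F := by
  simp [endXi]
lemma endL_apply (n : ℕ) (i F) : endL n i F = dL n i F := by
  simp [endL, dL, dE_apply, dX_apply, Finset.mul_sum, mul_assoc]

lemma dE_inl (n : ℕ) (j : Fin n) : dE n (X (Sum.inl j)) = 0 := by
  simp [dE_apply, pderiv_X]
lemma dE_inr (n : ℕ) (j : Fin n) : dE n (X (Sum.inr j)) = X (Sum.inr j) := by
  simp [dE_apply, pderiv_X, Pi.single_apply]
lemma dX_inr (n : ℕ) (j : Fin n) : dX n (X (Sum.inr j)) = 0 := by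
  simp [dX_apply, pderiv_X]
lemma dX_inl (n : ℕ) (j : Fin n) : dX n (X (Sum.inl j)) = X (Sum.inl j) := by
  simp [dX_apply, pderiv_X, Pi.single_apply]
lemma dL_inl (n : ℕ) (i j : Fin n) : dL n i (X (Sum.inl j)) = X (Sum.inl i) * X (Sum.inl j) := by
  simp [dL, dX_inl, dE_inl, pderiv_X]
lemma dL_inr (n : ℕ) (i j : Fin n) : dL n i (X (Sum.inr j)) =
   - (if j = i then ∑ k : Fin n, X (Sum.inr k) * X (Sum.inl k) else 0) - X (Sum.inl i) * X (Sum.inr j) := by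
  simp [dL, dX_inr, dE_inr, pderiv_X, Pi.single_apply]

lemma pdrr {n : ℕ} (j c : Fin n) : pderiv (Sum.inr j) (X (Sum.inr c) : MvPolynomial (Fin n ⊕ Fin n) ℂ) = if c = j then 1 else 0 := by
  by_cases h : c = j <;> simp [pderiv_X, Pi.single_apply, h]
lemma pdll {n : ℕ} (j c : Fin n) : pderiv (Sum.inl j) (X (Sum.inl c) : MvPolynomial (Fin n ⊕ Fin n) ℂ) = if c = j then 1 else 0 := by
  by_cases h : c = j <;> simp [pderiv_X, Pi.single_apply, h]
lemma pdlr {n : ℕ} (j c : Fin n) : pderiv (Sum.inl j) (X (Sum.inr c) : MvPolynomial (Fin n ⊕ Fin n) ℂ) = 0 := by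
  simp [pderiv_X]
lemma pdrl {n : ℕ} (j c : Fin n) : pderiv (Sum.inr j) (X (Sum.inl c) : MvPolynomial (Fin n ⊕ Fin n) ℂ) = 0 := by
  simp [pderiv_X]

lemma pd_comm {n : ℕ} (a b : Fin n ⊕ Fin n) (F : MvPolynomial (Fin n ⊕ Fin n) ℂ) :
    pderiv a (pderiv b F) = pderiv b (pderiv a F) := by
  have : ⁅(pderiv a : Derivation ℂ (MvPolynomial (Fin n ⊕ Fin n) ℂ) (MvPolynomial (Fin n ⊕ Fin n) ℂ)), (pderiv b : Derivation ℂ (MvPolynomial (Fin n ⊕ Fin n) ℂ) (MvPolynomial (Fin n ⊕ Fin n) ℂ))⁆ = 0 := by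
    apply MvPolynomial.derivation_ext
    intro c
    rw [Derivation.commutator_apply]
    simp [pderiv_X, Pi.single_apply, apply_ite]
  have h := congrArg (fun d => d F) this
  simpa [Derivation.commutator_apply, sub_eq_zero] using h

lemma dL_dE {n : ℕ} (i : Fin n) (F : MvPolynomial (Fin n ⊕ Fin n) ℂ) :
    dL n i (dE n F) = dE n (dL n i F) := by
  have : ⁅dL n i, dE n⁆ = 0 := by
    apply MvPolynomial.derivation_ext
    rintro (c | c)
    · simp [Derivation.commutator_apply, dE_inl, dL_inl]
    · simp only [Derivation.commutator_apply, dE_inr, dL_inr]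
      split_ifs <;> simp [dE_inl, dE_inr, mul_comm]
  have h := congrArg (fun d => d F) this
  simpa [Derivation.commutator_apply, sub_eq_zero] using h

lemma xi_dE {n : ℕ} (j : Fin n) (F : MvPolynomial (Fin n ⊕ Fin n) ℂ) :
    pderiv (Sum.inr j) (dE n F) = dE n (pderiv (Sum.inr j) F) + pderiv (Sum.inr j) F := by
  have : ⁅(pderiv (Sum.inr j) : Derivation ℂ (MvPolynomial (Fin n ⊕ Fin n) ℂ) _), dE n⁆ = pderiv (Sum.inr j) := by
    apply MvPolynomial.derivation_ext
    rintro (c | c)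
    · simp [Derivation.commutator_apply, dE_inl, pderiv_X]
    · simp only [Derivation.commutator_apply, dE_inr, pderiv_X, Pi.single_apply]
      split_ifs <;> simp
  have h := congrArg (fun d => d F) this
  simp only [Derivation.commutator_apply] at h
  linear_combination h

lemma x_dE {n : ℕ} (j : Fin n) (F : MvPolynomial (Fin n ⊕ Fin n) ℂ) :
    pderiv (Sum.inl j) (dE n F) = dE n (pderiv (Sum.inl j) F) := by
  have : ⁅(pderiv (Sum.inl j) : Derivation ℂ (MvPolynomial (Fin n ⊕ Fin n) ℂ) _), dE n⁆ = 0 := by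
    apply MvPolynomial.derivation_ext
    rintro (c | c)
    · simp only [Derivation.commutator_apply, dE_inl, pderiv_X, Pi.single_apply]
      split_ifs <;> simp
    · simp [Derivation.commutator_apply, dE_inr, pderiv_X]
  have h := congrArg (fun d => d F) this
  simpa [Derivation.commutator_apply, sub_eq_zero] using h

lemma xi_dL {n : ℕ} (i j : Fin n) (F : MvPolynomial (Fin n ⊕ Fin n) ℂ) :
    pderiv (Sum.inr j) (dL n i F) = dL n i (pderiv (Sum.inr j) F)
      - X (Sum.inl j) * pderiv (Sum.inr i) F - X (Sum.inl i) * pderiv (Sum.inr j) F := by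
  have : ⁅(pderiv (Sum.inr j) : Derivation ℂ (MvPolynomial (Fin n ⊕ Fin n) ℂ) _), dL n i⁆ =
      - (X (Sum.inl j) : MvPolynomial (Fin n ⊕ Fin n) ℂ) • pderiv (Sum.inr i)
      - (X (Sum.inl i) : MvPolynomial (Fin n ⊕ Fin n) ℂ) • pderiv (Sum.inr j) := by
    apply MvPolynomial.derivation_ext
    rintro (c | c)
    · simp [Derivation.commutator_apply, dL_inl, pderiv_X]
    · by_cases h1 : c = i <;> by_cases h2 : c = j <;>
      simp [-pderiv_X, Derivation.commutator_apply, dL_inr, pdrr, pdrl, h1, h2] <;> (try split_ifs) <;> first | grind | simp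
  have h := congrArg (fun d => d F) this
  simp [Derivation.commutator_apply] at h
  linear_combination h

lemma x_dL {n : ℕ} (i j : Fin n) (F : MvPolynomial (Fin n ⊕ Fin n) ℂ) :
    pderiv (Sum.inl j) (dL n i F) = dL n i (pderiv (Sum.inl j) F)
      + (if j = i then dX n F - dE n F else 0) + X (Sum.inl i) * pderiv (Sum.inl j) F
      - X (Sum.inr j) * pderiv (Sum.inr i) F := by
  have : ⁅(pderiv (Sum.inl j) : Derivation ℂ (MvPolynomial (Fin n ⊕ Fin n) ℂ) _), dL n i⁆ =
      (if j = i then dX n - dE n else 0)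
      + (X (Sum.inl i) : MvPolynomial (Fin n ⊕ Fin n) ℂ) • pderiv (Sum.inl j)
      - (X (Sum.inr j) : MvPolynomial (Fin n ⊕ Fin n) ℂ) • pderiv (Sum.inr i) := by
    apply MvPolynomial.derivation_ext
    rintro (c | c)
    · by_cases h1 : j = i <;> by_cases h2 : c = j <;> by_cases h3 : c = i <;>
      simp [-pderiv_X, Derivation.commutator_apply, dL_inl, pdll, pdrl, h1, h2, h3, dX_inl, dE_inl] <;> grind
    · by_cases h1 : j = i <;> by_cases h2 : c = i <;>
      simp [-pderiv_X, Derivation.commutator_apply, dL_inr, pdrr, pdll, pdlr, h1, h2, dX_inr, dE_inr] <;> grind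
  have h := congrArg (fun d => d F) this
  simp [Derivation.commutator_apply] at h
  split_ifs at h ⊢ <;> simp at h ⊢ <;> linear_combination h

lemma L_D_comm {n : ℕ} (i : Fin n) :
    endL n i * endD n = endD n * endL n i + ((2 : ℂ) • endE n + (n + 1 : ℂ) • 1) * endXi n i := by
  apply LinearMap.ext
  intro F
  have key : ∀ j : Fin n, pderiv (Sum.inl j) (pderiv (Sum.inr j) (dL n i F)) =
      dL n i (pderiv (Sum.inl j) (pderiv (Sum.inr j) F))
      + (if j = i then dX n (pderiv (Sum.inr i) F) - dE n (pderiv (Sum.inr i) F)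
          - pderiv (Sum.inr i) F else 0)
      - X (Sum.inr j) * pderiv (Sum.inr j) (pderiv (Sum.inr i) F)
      - pderiv (Sum.inr i) F
      - X (Sum.inl j) * pderiv (Sum.inl j) (pderiv (Sum.inr i) F) := by
    intro j
    rw [xi_dL, map_sub, map_sub, x_dL, pd_comm (Sum.inr i) (Sum.inr j)]
    by_cases h : j = i
    · subst h
      simp [-pderiv_X, pdll]
      ring
    · simp [-pderiv_X, pdll, h, Ne.symm h]
      ring
  simp only [Module.End.mul_apply, LinearMap.add_apply, LinearMap.smul_apply, Module.End.one_apply,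
    endD_apply, endL_apply, endXi_apply, endE_apply, key, Finset.sum_add_distrib,
    Finset.sum_sub_distrib, ← dE_apply, ← dX_apply, map_sum]
  simp
  simp only [smul_eq_C_mul]
  simp [show (C 2 : MvPolynomial (Fin n ⊕ Fin n) ℂ) = 2 from map_ofNat C 2]
  ring

lemma D_E_comm (n : ℕ) : endD n * endE n = (endE n + 1) * endD n := by
  apply LinearMap.ext
  intro F
  simp [endE_apply, endD_apply, xi_dE, x_dE, Finset.sum_add_distrib]
lemma L_E_comm {n : ℕ} (i) : Commute (endL n i) (endE n) := by
  apply LinearMap.ext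
  intro F
  simp [endE_apply, endL_apply, dL_dE]
lemma Xi_D_comm {n : ℕ} (i) : Commute (endXi n i) (endD n) := by
  apply LinearMap.ext
  intro F
  simp only [Module.End.mul_apply, endD_apply, endXi_apply, map_sum]
  refine Finset.sum_congr rfl fun j _ => ?_
  rw [pd_comm (Sum.inr i) (Sum.inl j), pd_comm (Sum.inr i) (Sum.inr j)]

lemma L_D_pow {n : ℕ} (i : Fin n) (s : ℕ) :
    endL n i * endD n ^ (s + 1) = endD n ^ (s + 1) * endL n i +
      ((s + 1 : ℕ) : ℂ) • ((2 • endE n + ((n : ℂ) + ((s + 1 : ℕ) : ℂ)) • 1) * endD n ^ s * endXi n i) := by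
  induction s with
  | zero =>
    simp only [zero_add, pow_one, L_D_comm]
    simp [two_smul]
  | succ s ih =>
    have h1 : endXi n i * endD n ^ (s + 1) = endD n ^ (s + 1) * endXi n i := (Xi_D_comm i).pow_right _
    have h2 : endD n * (endE n * (endD n ^ s * endXi n i)) =
        endE n * (endD n ^ (s + 1) * endXi n i) + endD n ^ (s + 1) * endXi n i := by
      rw [← mul_assoc, D_E_comm, pow_succ']
      simp only [add_mul, one_mul, mul_assoc]
    have h3 : endD n * (endD n ^ s * endXi n i) = endD n ^ (s + 1) * endXi n i := by
      rw [pow_succ', mul_assoc]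
    rw [pow_succ' _ (s + 1), ← mul_assoc, L_D_comm, add_mul, mul_assoc, ih, mul_add,
      mul_assoc _ (endXi n i), h1]
    simp only [add_mul, mul_add, smul_mul_assoc, mul_smul_comm, one_mul, mul_assoc, h2, h3, smul_add]
    push_cast
    module

lemma pd_test_r {n : ℕ} (i : Fin n) (a b : ℕ) :
    pderiv (Sum.inr i) (X (Sum.inl i) ^ a * X (Sum.inr i) ^ b : MvPolynomial (Fin n ⊕ Fin n) ℂ)
      = (b : ℂ) • (X (Sum.inl i) ^ a * X (Sum.inr i) ^ (b - 1)) := by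
  simp [Derivation.leibniz_pow, pdrr, pdrl, smul_eq_C_mul]
  ring
lemma pd_test_l {n : ℕ} (i : Fin n) (a b : ℕ) :
    pderiv (Sum.inl i) (X (Sum.inl i) ^ a * X (Sum.inr i) ^ b : MvPolynomial (Fin n ⊕ Fin n) ℂ)
      = (a : ℂ) • (X (Sum.inl i) ^ (a - 1) * X (Sum.inr i) ^ b) := by
  simp [Derivation.leibniz_pow, pdll, pdlr, smul_eq_C_mul]
  ring
lemma E_test {n : ℕ} (i : Fin n) (a b : ℕ) :
    endE n (X (Sum.inl i) ^ a * X (Sum.inr i) ^ b : MvPolynomial (Fin n ⊕ Fin n) ℂ)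
      = (b : ℂ) • (X (Sum.inl i) ^ a * X (Sum.inr i) ^ b) := by
  rw [endE_apply]
  cases b <;> simp [Derivation.leibniz_pow, dE_inl, dE_inr, smul_eq_C_mul]
  ring
lemma D_test {n : ℕ} (i : Fin n) (a b : ℕ) :
    endD n (X (Sum.inl i) ^ a * X (Sum.inr i) ^ b : MvPolynomial (Fin n ⊕ Fin n) ℂ)
      = ((a : ℂ) * b) • (X (Sum.inl i) ^ (a - 1) * X (Sum.inr i) ^ (b - 1)) := by
  rw [endD_apply, Finset.sum_eq_single i]
  · rw [pd_test_r, Derivation.map_smul, pd_test_l, smul_smul, mul_comm]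
  · intro j _ hj
    simp [Derivation.leibniz_pow, pdrr, pdrl, hj.symm]
  · simp
lemma D_pow_test {n : ℕ} (i : Fin n) (a b t : ℕ) :
    (endD n ^ t) (X (Sum.inl i) ^ a * X (Sum.inr i) ^ b : MvPolynomial (Fin n ⊕ Fin n) ℂ)
      = ((a.descFactorial t : ℂ) * b.descFactorial t) • (X (Sum.inl i) ^ (a - t) * X (Sum.inr i) ^ (b - t)) := by
  induction t with
  | zero => simp
  | succ t ih =>
    rw [pow_succ', Module.End.mul_apply, ih, map_smul, D_test, smul_smul, Nat.descFactorial_succ,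
      Nat.descFactorial_succ, Nat.sub_sub, Nat.sub_sub]
    congr 1
    push_cast
    ring
lemma aeval_eig {M : Type*} [AddCommGroup M] [Module ℂ M] (E : Module.End ℂ M) (v : M) (c : ℂ) (h : E v = c • v)
    (P : Polynomial ℂ) : Polynomial.aeval E P v = P.eval c • v := by
  induction P using Polynomial.induction_on' with
  | add p q hp hq => simp [hp, hq, add_smul]
  | monomial k a =>
    have : (E ^ k) v = c ^ k • v := by
      induction k with
      | zero => simp
      | succ k ih => rw [pow_succ', Module.End.mul_apply, ih, map_smul, h, smul_smul, pow_succ]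
    simp [Polynomial.aeval_monomial, this, smul_smul, mul_comm]

lemma comm_formula (n : ℕ) (P : ℕ → Polynomial ℂ) (N : ℕ) (i : Fin n) :
   endL n i * (∑ s ∈ Finset.range (N + 1), Polynomial.aeval (endE n) (P s) * (endD n) ^ s)
    - (∑ s ∈ Finset.range (N + 1), Polynomial.aeval (endE n) (P s) * (endD n) ^ s) * endL n i =
        ∑ s ∈ Finset.range (N + 1), (s : ℂ) •
          (Polynomial.aeval (endE n) (P s) *
            (2 • endE n + ((n : ℂ) + (s : ℂ)) •
              (1 : Module.End ℂ (MvPolynomial (Fin n ⊕ Fin n) ℂ))) *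
            (endD n) ^ (s - 1) * endXi n i) := by
  rw [Finset.mul_sum, Finset.sum_mul, ← Finset.sum_sub_distrib]
  refine Finset.sum_congr rfl fun s _ => ?_
  have hc : Commute (endL n i) (Polynomial.aeval (endE n) (P s)) := by
    have h := L_E_comm i
    induction P s using Polynomial.induction_on' with
    | add p q hp hq => rw [map_add]; exact hp.add_right hq
    | monomial k a =>
      rw [Polynomial.aeval_monomial]
      exact (Algebra.commute_algebraMap_right a _).mul_right (h.pow_right k)
  rw [← mul_assoc, hc.eq, mul_assoc, mul_assoc, ← mul_sub]
  cases s with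
  | zero => simp [hc.eq]
  | succ s =>
    rw [L_D_pow, add_sub_cancel_left, mul_smul_comm]
    simp only [Nat.add_sub_cancel, mul_assoc]

lemma vanish (n : ℕ) (i : Fin n) (P : ℕ → Polynomial ℂ) (N : ℕ) (hP : ∀ s, N < s → P s = 0)
   (h : ∑ s ∈ Finset.range (N + 1), (s : ℂ) •
          (Polynomial.aeval (endE n) (P s) *
            (2 • endE n + ((n : ℂ) + (s : ℂ)) •
              (1 : Module.End ℂ (MvPolynomial (Fin n ⊕ Fin n) ℂ))) *
            (endD n) ^ (s - 1) * endXi n i) = 0) (s : ℕ) : 1 ≤ s → P s = 0 := by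
  induction s using Nat.strong_induction_on with
  | _ s ih =>
  intro hs
  by_cases hsN : N < s
  · exact hP s hsN
  have hz : ∀ m : ℕ, (P s).eval (m : ℂ) = 0 := by
    intro m
    have h' := congrArg (fun T => T (X (Sum.inl i) ^ (s - 1) * X (Sum.inr i) ^ (m + s))) h
    simp only [LinearMap.sum_apply, LinearMap.zero_apply] at h'
    rw [Finset.sum_eq_single s] at h'
    · have e : (m + s - 1 - (s - 1)) = m := by omega
      rw [LinearMap.smul_apply, Module.End.mul_apply, Module.End.mul_apply, Module.End.mul_apply, endXi_apply, pd_test_r, map_smul,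
        D_pow_test] at h'
      simp only [map_smul] at h'
      rw [e, LinearMap.add_apply, LinearMap.smul_apply, E_test,
        LinearMap.smul_apply, Module.End.one_apply, ← Nat.cast_smul_eq_nsmul ℂ, smul_smul ((2 : ℕ) : ℂ), ← add_smul,
        map_smul, aeval_eig _ _ _ (E_test i _ _)] at h'
      have hne : (X (Sum.inl i) ^ (s - 1 - (s - 1)) * X (Sum.inr i) ^ m : MvPolynomial (Fin n ⊕ Fin n) ℂ) ≠ 0 :=
        mul_ne_zero (pow_ne_zero _ (X_ne_zero _)) (pow_ne_zero _ (X_ne_zero _))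
      have h1 : (s : ℂ) ≠ 0 := by exact_mod_cast (by omega : s ≠ 0)
      have h2 : ((m + s : ℕ) : ℂ) ≠ 0 := by exact_mod_cast (by omega : m + s ≠ 0)
      have h3 : ((s - 1).descFactorial (s - 1) : ℂ) ≠ 0 := by
        rw [Nat.cast_ne_zero, Ne, Nat.descFactorial_eq_zero_iff_lt]; omega
      have h4 : ((m + s - 1).descFactorial (s - 1) : ℂ) ≠ 0 := by
        rw [Nat.cast_ne_zero, Ne, Nat.descFactorial_eq_zero_iff_lt]; omega
      have h5 : (((2 : ℕ) : ℂ) * m + (n + s)) ≠ 0 := by exact_mod_cast (by omega : 2 * m + (n + s) ≠ 0)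
      simpa only [smul_eq_zero, mul_eq_zero, h1, h2, h3, h4, h5, hne, false_or, or_false] using h'
    · intro t _ hts
      rcases Nat.lt_or_gt_of_ne hts with hlt | hgt
      · rcases Nat.eq_zero_or_pos t with rfl | ht
        · simp
        · rw [ih t hlt ht]; simp
      · have : (s - 1).descFactorial (t - 1) = 0 := by
          rw [Nat.descFactorial_eq_zero_iff_lt]; omega
        rw [LinearMap.smul_apply, Module.End.mul_apply, Module.End.mul_apply, endXi_apply, pd_test_r, map_smul,
          D_pow_test, this]
        simp
    · intro hh
      exact absurd (Finset.mem_range.2 (by omega)) hh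
  apply Polynomial.eq_zero_of_infinite_isRoot
  refine Set.Infinite.mono ?_ (Set.infinite_range_of_injective (Nat.cast_injective (R := ℂ)))
  rintro _ ⟨m, rfl⟩
  exact hz m

/-- For `A = Σ_s P_s(ℰ) D^s` one has
`[L_{X_i}, A] = Σ_{s≥1} s P_s(ℰ)(2ℰ + n + s) D^{s−1} ∘ ∂/∂ξᵢ`;
this vanishes for all `i` iff `P_s = 0` for all `s ≥ 1`, and consequently
any such `A` commuting with all inversions equals `P₀(ℰ)`. -/
theorem affine_invariant_op_commuting_with_inversions (n : ℕ) (hn : 0 < n)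
    (P : ℕ → Polynomial ℂ) (N : ℕ) (hP : ∀ s, N < s → P s = 0)
    (A : Module.End ℂ (MvPolynomial (Fin n ⊕ Fin n) ℂ))
    (hA : A = ∑ s ∈ Finset.range (N + 1), Polynomial.aeval (endE n) (P s) * (endD n) ^ s) :
    (∀ i : Fin n, endL n i * A - A * endL n i =
        ∑ s ∈ Finset.range (N + 1), (s : ℂ) •
          (Polynomial.aeval (endE n) (P s) *
            (2 • endE n + ((n : ℂ) + (s : ℂ)) •
              (1 : Module.End ℂ (MvPolynomial (Fin n ⊕ Fin n) ℂ))) *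
            (endD n) ^ (s - 1) * endXi n i)) ∧
    ((∀ i : Fin n, endL n i * A = A * endL n i) ↔ ∀ s, 1 ≤ s → P s = 0) ∧
    ((∀ i : Fin n, endL n i * A = A * endL n i) →
      A = Polynomial.aeval (endE n) (P 0)) := by
  have hiff : (∀ i : Fin n, endL n i * A = A * endL n i) ↔ ∀ s, 1 ≤ s → P s = 0 := by
    constructor
    · intro h
      have h0 := h ⟨0, hn⟩
      rw [← sub_eq_zero, hA, comm_formula] at h0
      exact vanish n ⟨0, hn⟩ P N hP h0
    · intro h i
      rw [← sub_eq_zero, hA, comm_formula]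
      refine Finset.sum_eq_zero fun s _ => ?_
      rcases Nat.eq_zero_or_pos s with rfl | hs
      · simp
      · rw [h s hs]; simp
  refine ⟨fun i => ?_, hiff, fun h => ?_⟩
  · rw [hA]; exact comm_formula n P N i
  · have h0 := hiff.1 h
    rw [hA, Finset.sum_eq_single 0]
    · simp
    · intro s _ hs
      rw [h0 s (by omega)]; simp
    · simp
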